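/- For every real x > 0, every real α > 0, and every real β with α − β not an integer, (x^α/Γ(α)) · ∫₀^∞ u^{α−1} e^{−ux} (1+u)^{−β} du = (Γ(β−α)/Γ(β))·x^α·φ(α, α−β+1, x) + (Γ(α−β)/Γ(α))·x^β·φ(β, β−α+1, x). -/

import Mathlib

/-!
Fix `α > 0` and multiply the formula by `Γ(α) x ^ (-α)`: it reads `I_β = R_β`, where `I_β(x)` is the
integral (`kummerInt`) and `R_β(x)` the combination of two Kummer series (`kummerRhs`). Both
families satisfy the same two relations in `β`:

* `I_β' = I_β - I_{β-1}` and `x I_β' = (β - α) I_β - β I_{β+1}`.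

For `I` the first is differentiation under the integral sign and the second an integration by
parts; for `R` they are contiguous relations for `φ`, checked on Taylor coefficients, combined with
`Γ(t + 1) = t Γ(t)`. At the poles of `Γ(β)` the convention `Real.Gamma = 0` gives the correct value
`0` of `1 / Γ(β)`.

The two relations at consecutive parameters form a first-order linear `2 × 2` system for
`(I_β, I_{β-1})`, singular at `x = 0`. In the strip `α < β < α + 1` it becomes, after multiplying
the second unknown by `x ^ (1 - (β - α))`, a system with coefficients integrable at `0`, so a
solution is determined by its limits at `0` (`system_unique`). These limits agree: both sides
satisfy `I_β → Γ(β - α) Γ(α) / Γ(β)`, by Euler's beta integral, and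
`x ^ (α - β + 1) I_{β-1} → Γ(α - β + 1)`, by the substitution `v = u x`. This proves the formula in
the strip, and the two relations transport it to every `β` with `α - β` not an integer, since each
of them expresses the neighbouring function through `I_β` and its derivative.
-/

open MeasureTheory
open scoped Nat

/-- Kummer's confluent hypergeometric series φ(α,β,x) = ∑ (α)ₙ/(β)ₙ · xⁿ/n!. -/
noncomputable def kummerPhi (α β x : ℝ) : ℝ :=
  ∑' n : ℕ, ((ascPochhammer ℝ n).eval α / (ascPochhammer ℝ n).eval β) * x ^ n / (n ! : ℝ)


/-! ### The confluent hypergeometric series -/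

/-- The `n`-th Taylor coefficient of `kummerPhi a b` at `0`. -/
noncomputable def kummerCoeff (a b : ℝ) (n : ℕ) : ℝ :=
  (ascPochhammer ℝ n).eval a / (ascPochhammer ℝ n).eval b / (n ! : ℝ)

lemma kummerPhi_eq_tsum (a b x : ℝ) : kummerPhi a b x = ∑' n, kummerCoeff a b n * x ^ n := by
  unfold kummerPhi kummerCoeff
  congr 1; ext n; ring

lemma kummerCoeff_zero (a b : ℝ) : kummerCoeff a b 0 = 1 := by simp [kummerCoeff]

lemma kummerCoeff_succ (a b : ℝ) (n : ℕ) :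
    kummerCoeff a b (n + 1) = kummerCoeff a b n * ((a + n) / ((b + n) * (n + 1))) := by
  simp only [kummerCoeff, ascPochhammer_succ_eval, Nat.factorial_succ]
  push_cast
  simp only [div_eq_mul_inv, mul_inv]
  ring

lemma ascPochhammer_eval_succ_left (a : ℝ) (n : ℕ) :
    (ascPochhammer ℝ (n + 1)).eval a = a * (ascPochhammer ℝ n).eval (a + 1) := by
  simp [ascPochhammer_succ_left]

lemma ascPochhammer_eval_ne_zero {b : ℝ} (hb : ∀ n : ℕ, b + n ≠ 0) (n : ℕ) :
    (ascPochhammer ℝ n).eval b ≠ 0 := by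
  induction n with
  | zero => simp
  | succ n ih => rw [ascPochhammer_succ_eval]; exact mul_ne_zero ih (hb n)

/-- Ratio test: consecutive coefficients have ratio tending to `0`. -/
lemma summable_kummerCoeff (a b r : ℝ) : Summable fun n => kummerCoeff a b n * r ^ n := by
  have h1 : Filter.Tendsto (fun n : ℕ => (a + n) / (b + n)) Filter.atTop (nhds 1) := by
    have h := tendsto_add_mul_div_add_mul_atTop_nhds a b (1 : ℝ) (d := 1) one_ne_zero
    simpa using h
  have h2 : Filter.Tendsto (fun n : ℕ => (1 : ℝ) / (n + 1)) Filter.atTop (nhds 0) :=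
    tendsto_one_div_add_atTop_nhds_zero_nat
  have h3 : Filter.Tendsto (fun n : ℕ => ‖(a + n) / (b + n) * (1 / (n + 1)) * r‖)
      Filter.atTop (nhds 0) := by
    simpa using ((h1.mul h2).mul_const r).norm
  apply summable_of_ratio_norm_eventually_le (r := 1 / 2) (by norm_num)
  filter_upwards [h3.eventually_le_const (show (0 : ℝ) < 1 / 2 by norm_num)] with n hn
  have : kummerCoeff a b (n + 1) * r ^ (n + 1)
      = ((a + n) / (b + n) * (1 / (n + 1)) * r) * (kummerCoeff a b n * r ^ n) := by
    rw [kummerCoeff_succ]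
    simp only [div_eq_mul_inv, mul_inv, pow_succ]
    ring
  rw [this, norm_mul]
  gcongr

/-- An everywhere convergent real power series may be differentiated term by term. -/
lemma hasDerivAt_powerSeries {c : ℕ → ℝ} (hc : ∀ r : ℝ, Summable fun n => c n * r ^ n) (x : ℝ) :
    Summable (fun n : ℕ => (n + 1) * c (n + 1) * x ^ n) ∧
    HasDerivAt (fun y => ∑' n, c n * y ^ n) (∑' n : ℕ, (n + 1) * c (n + 1) * x ^ n) x := by
  set R : ℝ := |x| + 1 with hR
  have hR1 : 1 ≤ R := by rw [hR]; linarith [abs_nonneg x]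
  have hu : Summable fun n : ℕ => ‖c n * (2 * R) ^ n‖ := (hc (2 * R)).norm
  have hbound : ∀ (n : ℕ) (y : ℝ), |y| ≤ R →
      ‖c n * (n * y ^ (n - 1))‖ ≤ ‖c n * (2 * R) ^ n‖ := by
    intro n y hy
    rw [norm_mul, norm_mul, norm_mul, norm_pow, norm_pow]
    have h2 : (n : ℝ) ≤ 2 ^ n := by exact_mod_cast Nat.lt_two_pow_self.le
    have h3 : |y| ^ (n - 1) ≤ R ^ n :=
      (pow_le_pow_left₀ (abs_nonneg y) hy _).trans (pow_le_pow_right₀ hR1 (Nat.sub_le n 1))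
    have h4 : ‖2 * R‖ = 2 * R := by rw [Real.norm_eq_abs, abs_of_pos]; positivity
    rw [h4, mul_pow, Real.norm_natCast, Real.norm_eq_abs y]
    gcongr
  have hxR : |x| < R := by rw [hR]; linarith
  have hmem : ∀ y ∈ Metric.ball (0 : ℝ) R, |y| ≤ R := by
    intro y hy
    rw [mem_ball_zero_iff, Real.norm_eq_abs] at hy
    exact hy.le
  have hd := hasDerivAt_tsum_of_isPreconnected (g := fun n y => c n * y ^ n)
    (g' := fun n y => c n * (n * y ^ (n - 1))) hu Metric.isOpen_ball
    (convex_ball (0 : ℝ) R).isPreconnected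
    (fun n y _ => (hasDerivAt_pow n y).const_mul (c n))
    (fun n y hy => hbound n y (hmem y hy))
    (Metric.mem_ball_self (by linarith)) (hc 0)
    (y := x) (by rwa [mem_ball_zero_iff, Real.norm_eq_abs])
  have hs : Summable fun n : ℕ => c n * (n * x ^ (n - 1)) :=
    Summable.of_norm_bounded hu (fun n => hbound n x hxR.le)
  have e : ∀ n : ℕ, c (n + 1) * (((n + 1 : ℕ) : ℝ) * x ^ (n + 1 - 1))
      = (n + 1) * c (n + 1) * x ^ n := by
    intro n; simp; ring
  refine ⟨?_, ?_⟩
  · simpa only [e] using (summable_nat_add_iff 1).2 hs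
  · rw [hs.tsum_eq_zero_add] at hd
    simpa only [e, Nat.cast_zero, zero_mul, mul_zero, zero_add] using hd

/-- The derivative of `kummerPhi a b`, as a power series. -/
noncomputable def kummerPhiDeriv (a b x : ℝ) : ℝ :=
  ∑' n : ℕ, (n + 1) * kummerCoeff a b (n + 1) * x ^ n

lemma hasSum_kummerPhi (a b x : ℝ) :
    HasSum (fun n => kummerCoeff a b n * x ^ n) (kummerPhi a b x) := by
  rw [kummerPhi_eq_tsum]; exact (summable_kummerCoeff a b x).hasSum

lemma hasSum_kummerPhiDeriv (a b x : ℝ) :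
    HasSum (fun n : ℕ => (n + 1) * kummerCoeff a b (n + 1) * x ^ n) (kummerPhiDeriv a b x) :=
  (hasDerivAt_powerSeries (summable_kummerCoeff a b) x).1.hasSum

lemma hasDerivAt_kummerPhi (a b x : ℝ) :
    HasDerivAt (kummerPhi a b) (kummerPhiDeriv a b x) x := by
  have := (hasDerivAt_powerSeries (summable_kummerCoeff a b) x).2
  rwa [← funext (kummerPhi_eq_tsum a b)] at this

lemma kummerPhi_zero (a b : ℝ) : kummerPhi a b 0 = 1 := by
  rw [kummerPhi_eq_tsum, tsum_eq_single 0]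
  · simp [kummerCoeff_zero]
  · intro n hn; simp [hn]

lemma tendsto_kummerPhi_zero (a b : ℝ) :
    Filter.Tendsto (kummerPhi a b) (nhdsWithin 0 (Set.Ioi 0)) (nhds 1) := by
  have h := (hasDerivAt_kummerPhi a b 0).continuousAt.tendsto
  rw [kummerPhi_zero] at h
  exact h.mono_left nhdsWithin_le_nhds

lemma hasSum_mul_kummerPhiDeriv (a b x : ℝ) :
    HasSum (fun n : ℕ => n * kummerCoeff a b n * x ^ n) (x * kummerPhiDeriv a b x) := by
  have h := (hasSum_kummerPhiDeriv a b x).mul_left x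
  rw [← hasSum_nat_add_iff' 1]
  simp only [Finset.range_one, Finset.sum_singleton, Nat.cast_zero, zero_mul, sub_zero]
  refine h.congr_fun ?_
  intro n; push_cast; ring

/-- `φ'(a, b) = (a / b) φ(a + 1, b + 1)`. -/
lemma kummerPhiDeriv_eq {a b : ℝ} (x : ℝ) (hb : ∀ n : ℕ, b + n ≠ 0) :
    b * kummerPhiDeriv a b x = a * kummerPhi (a + 1) (b + 1) x := by
  refine ((hasSum_kummerPhiDeriv a b x).mul_left b).unique ?_
  refine ((hasSum_kummerPhi (a + 1) (b + 1) x).mul_left a).congr_fun ?_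
  intro n
  have h1 := ascPochhammer_eval_ne_zero hb (n + 1)
  simp only [kummerCoeff, Nat.factorial_succ]
  rw [ascPochhammer_eval_succ_left] at h1 ⊢
  rw [ascPochhammer_eval_succ_left]
  have h2 := left_ne_zero_of_mul h1
  have h3 := right_ne_zero_of_mul h1
  have h4 : (n ! : ℝ) ≠ 0 := by positivity
  push_cast
  field_simp

lemma kummerPhi_lower_sub_one {a b : ℝ} (x : ℝ) (hb : ∀ n : ℕ, b + n ≠ 0) :
    b * kummerPhi a b x = b * kummerPhi a (b + 1) x + x * kummerPhiDeriv a (b + 1) x := by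
  refine ((hasSum_kummerPhi a b x).mul_left b).unique ?_
  refine (((hasSum_kummerPhi a (b + 1) x).mul_left b).add
    (hasSum_mul_kummerPhiDeriv a (b + 1) x)).congr_fun ?_
  intro n
  have h1 := ascPochhammer_eval_ne_zero hb n
  have h2 := ascPochhammer_succ_eval n b
  have h3 := ascPochhammer_eval_ne_zero hb (n + 1)
  rw [ascPochhammer_eval_succ_left] at h2 h3
  have h5 := right_ne_zero_of_mul h3
  have h4 : (n ! : ℝ) ≠ 0 := by positivity
  simp only [kummerCoeff]
  field_simp
  linear_combination (Polynomial.eval a (ascPochhammer ℝ n) * x ^ n) * h2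

lemma kummerPhi_lower_add_one {a b : ℝ} (x : ℝ) (hb : ∀ n : ℕ, b + n ≠ 0) :
    b * (kummerPhiDeriv a b x - kummerPhi a b x) = (a - b) * kummerPhi a (b + 1) x := by
  refine (((hasSum_kummerPhiDeriv a b x).sub (hasSum_kummerPhi a b x)).mul_left b).unique ?_
  refine ((hasSum_kummerPhi a (b + 1) x).mul_left (a - b)).congr_fun ?_
  intro n
  have h1 := ascPochhammer_eval_ne_zero hb n
  have h2 := ascPochhammer_succ_eval n b
  have h3 := ascPochhammer_eval_ne_zero hb (n + 1)
  rw [ascPochhammer_eval_succ_left] at h2 h3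
  have h5 := right_ne_zero_of_mul h3
  have h4 : (n ! : ℝ) ≠ 0 := by positivity
  have h6 := hb n
  rw [kummerCoeff_succ]
  simp only [kummerCoeff]
  have h7 : (n + 1 : ℝ) ≠ 0 := by positivity
  field_simp
  linear_combination ((a - b) * Polynomial.eval a (ascPochhammer ℝ n) * x ^ n) * h2

lemma kummerPhi_upper_sub_one {a b : ℝ} (x : ℝ) (hb : ∀ n : ℕ, b + n ≠ 0) :
    b * kummerPhi (a - 1) b x = b * kummerPhi a b x - x * kummerPhi a (b + 1) x := by
  have hA := ((hasSum_kummerPhi a b x).mul_left b).sub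
    ((hasSum_kummerPhi (a - 1) b x).mul_left b)
  rw [← hasSum_nat_add_iff' 1] at hA
  have hB := (hasSum_kummerPhi a (b + 1) x).mul_left x
  have := hA.unique (hB.congr_fun ?_)
  · simp [kummerCoeff_zero] at this
    linarith
  intro n
  have h3 := ascPochhammer_eval_ne_zero hb (n + 1)
  simp only [kummerCoeff, Nat.factorial_succ]
  rw [ascPochhammer_eval_succ_left (a - 1), ascPochhammer_succ_eval n a, sub_add_cancel]
  rw [ascPochhammer_eval_succ_left] at h3 ⊢
  have h5 := right_ne_zero_of_mul h3
  have h6 := left_ne_zero_of_mul h3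
  have h4 : (n ! : ℝ) ≠ 0 := by positivity
  have h7 : (n + 1 : ℝ) ≠ 0 := by positivity
  push_cast
  field_simp
  ring

/-! ### The series side and its two recurrences in `β` -/

/-- The right-hand side of the formula, multiplied by `Γ(α) x ^ (-α)`. -/
noncomputable def kummerRhs (α β x : ℝ) : ℝ :=
  Real.Gamma (β - α) * Real.Gamma α / Real.Gamma β * kummerPhi α (α - β + 1) x
    + Real.Gamma (α - β) * x ^ (β - α) * kummerPhi β (β - α + 1) x

/-- Valid at every `t`: at the poles both sides vanish, since `Real.Gamma` is `0` there. -/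
lemma inv_Gamma_eq (t : ℝ) : (Real.Gamma t)⁻¹ = t * (Real.Gamma (t + 1))⁻¹ := by
  rcases eq_or_ne t 0 with rfl | ht
  · simp
  · rw [Real.Gamma_add_one ht, mul_inv, ← mul_assoc, mul_inv_cancel₀ ht, one_mul]

lemma hasDerivAt_kummerRhs_aux (α β : ℝ) {x : ℝ} (hx : 0 < x) :
    HasDerivAt (kummerRhs α β)
      (Real.Gamma (β - α) * Real.Gamma α / Real.Gamma β * kummerPhiDeriv α (α - β + 1) x
        + (Real.Gamma (α - β) * ((β - α) * x ^ (β - α - 1)) * kummerPhi β (β - α + 1) x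
          + Real.Gamma (α - β) * x ^ (β - α) * kummerPhiDeriv β (β - α + 1) x)) x := by
  unfold kummerRhs
  exact ((hasDerivAt_kummerPhi _ _ x).const_mul _).add
    (((Real.hasDerivAt_rpow_const (Or.inl hx.ne')).const_mul _).mul (hasDerivAt_kummerPhi _ _ x))

/-- Lowering relation `R_β' = R_β - R_{β-1}`, with `R_β = kummerRhs α β`. -/
lemma hasDerivAt_kummerRhs {α β x : ℝ} (hαβ : ∀ k : ℤ, α - β ≠ k) (hx : 0 < x) :
    HasDerivAt (kummerRhs α β) (kummerRhs α β x - kummerRhs α (β - 1) x) x := by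
  convert hasDerivAt_kummerRhs_aux α β hx using 1
  have h1 := kummerPhi_lower_add_one (a := α) (b := α - β + 1) x (fun n h => hαβ (-(n + 1))
    (by push_cast; linarith))
  have hs : ∀ n : ℕ, (β - α) + n ≠ 0 := fun n h => hαβ n (by push_cast; linarith)
  have h2 := kummerPhi_upper_sub_one (a := β) x hs
  have h3 := kummerPhi_lower_sub_one (a := β) x hs
  have hs0 : α - β ≠ 0 := fun h => hαβ 0 (by simpa using h)
  have hs1 : α - β + 1 ≠ 0 := fun h => hαβ (-1) (by push_cast; linarith)
  have g1 : Real.Gamma (α - β + 1) = (α - β) * Real.Gamma (α - β) := Real.Gamma_add_one hs0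
  have g2 : Real.Gamma (β - α) = (β - α - 1) * Real.Gamma (β - α - 1) := by
    rw [← Real.Gamma_add_one (by contrapose! hs1; linarith)]; simp
  have g3 : (Real.Gamma (β - 1))⁻¹ = (β - 1) * (Real.Gamma β)⁻¹ := by
    rw [inv_Gamma_eq]; simp
  have hx' : x ^ (β - α) = x ^ (β - α - 1) * x := by
    rw [← Real.rpow_add_one hx.ne']; simp
  unfold kummerRhs
  rw [show α - (β - 1) = α - β + 1 by ring, show β - 1 - α = β - α - 1 by ring,
    show β - α - 1 + 1 = β - α by ring, g1, g2, hx']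
  simp only [div_eq_mul_inv, g3]
  linear_combination
    (-(Real.Gamma (β - α - 1) * Real.Gamma α * (Real.Gamma β)⁻¹)) * h1 * (-1)
    + Real.Gamma (α - β) * x ^ (β - α - 1) * (h2 + h3)

/-- Raising relation `x R_β' = (β - α) R_β - β R_{β+1}`, with `R_β = kummerRhs α β`. -/
lemma hasDerivAt_kummerRhs' {α β x : ℝ} (hαβ : ∀ k : ℤ, α - β ≠ k) (hx : 0 < x) :
    HasDerivAt (kummerRhs α β)
      (((β - α) * kummerRhs α β x - β * kummerRhs α (β + 1) x) / x) x := by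
  convert hasDerivAt_kummerRhs_aux α β hx using 1
  have h1 := kummerPhi_lower_sub_one (a := α) (b := α - β) x (fun n h => hαβ (-n)
    (by push_cast; linarith))
  have h2 := kummerPhiDeriv_eq (a := β) (b := β - α + 1) x (fun n h => hαβ (n + 1)
    (by push_cast; linarith))
  have hs0 : β - α ≠ 0 := fun h => hαβ 0 (by push_cast; linarith)
  have hs1 : α - β - 1 ≠ 0 := fun h => hαβ 1 (by push_cast; linarith)
  have g1 : Real.Gamma (α - β) = (α - β - 1) * Real.Gamma (α - β - 1) := by
    rw [← Real.Gamma_add_one hs1]; simp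
  have g2 : Real.Gamma (β - α + 1) = (β - α) * Real.Gamma (β - α) := Real.Gamma_add_one hs0
  have g3 : (Real.Gamma β)⁻¹ = β * (Real.Gamma (β + 1))⁻¹ := inv_Gamma_eq β
  have hx' : x ^ (β - α) = x ^ (β - α - 1) * x := by
    rw [← Real.rpow_add_one hx.ne']; simp
  have hx'' : x ^ (β - α + 1) = x ^ (β - α - 1) * x * x := by
    rw [← hx', Real.rpow_add_one hx.ne']
  unfold kummerRhs
  rw [show α - (β + 1) = α - β - 1 by ring, show β + 1 - α = β - α + 1 by ring,
    show α - β - 1 + 1 = α - β by ring, g1, g2, hx', hx'', div_eq_iff hx.ne']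
  simp only [div_eq_mul_inv, g3]
  linear_combination
    (Real.Gamma (β - α) * Real.Gamma α * β * (Real.Gamma (β + 1))⁻¹) * h1
    + Real.Gamma (α - β - 1) * x ^ (β - α - 1) * x * x * h2

/-! ### The Laplace-type integral and its two recurrences in `β` -/

/-- The integral on the left-hand side of the formula. -/
noncomputable def kummerInt (α β x : ℝ) : ℝ :=
  ∫ u in Set.Ioi (0 : ℝ), u ^ (α - 1) * Real.exp (-(u * x)) * (1 + u) ^ (-β)

lemma integrableOn_rpow_mul_exp {a x : ℝ} (ha : 0 < a) (hx : 0 < x) :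
    IntegrableOn (fun u : ℝ => u ^ (a - 1) * Real.exp (-(u * x))) (Set.Ioi 0) := by
  have := integrableOn_rpow_mul_exp_neg_mul_rpow (s := a - 1) (p := 1) (b := x)
    (by linarith) one_pos hx
  refine this.congr_fun (fun u _ => ?_) measurableSet_Ioi
  simp only [Real.rpow_one]
  congr 2; ring

lemma one_add_rpow_le {u : ℝ} (hu : 0 < u) (c : ℝ) :
    (1 + u) ^ c ≤ 2 ^ |c| * (1 + u ^ |c|) := by
  have h0 : (1 + u) ^ c ≤ (1 + u) ^ |c| :=
    Real.rpow_le_rpow_of_exponent_le (by linarith) (le_abs_self c)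
  refine h0.trans ?_
  have hu' : 0 ≤ u ^ |c| := by positivity
  have h2 : (0 : ℝ) ≤ 2 ^ |c| := by positivity
  rcases le_total u 1 with h | h
  · calc (1 + u) ^ |c| ≤ 2 ^ |c| := Real.rpow_le_rpow (by linarith) (by linarith) (abs_nonneg c)
      _ ≤ _ := by nlinarith
  · calc (1 + u) ^ |c| ≤ (2 * u) ^ |c| :=
          Real.rpow_le_rpow (by linarith) (by linarith) (abs_nonneg c)
      _ = 2 ^ |c| * u ^ |c| := Real.mul_rpow (by norm_num) hu.le
      _ ≤ _ := by nlinarith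

/-- The weight `(1 + u) ^ c` grows at most polynomially, so it costs only two Gamma integrals. -/
lemma integrableOn_kummer {a x : ℝ} (ha : 0 < a) (hx : 0 < x) (c : ℝ) :
    IntegrableOn (fun u : ℝ => u ^ (a - 1) * Real.exp (-(u * x)) * (1 + u) ^ c) (Set.Ioi 0) := by
  have h1 := (integrableOn_rpow_mul_exp ha hx).add
    (integrableOn_rpow_mul_exp (a := a + |c|) (by positivity) hx)
  refine (h1.const_mul (2 ^ |c|)).mono' (by fun_prop) ?_
  refine (ae_restrict_iff' measurableSet_Ioi).2 (ae_of_all _ fun u hu => ?_)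
  have hu : 0 < u := hu
  rw [Real.norm_of_nonneg (by positivity)]
  have h3 : u ^ (a + |c| - 1) = u ^ (a - 1) * u ^ |c| := by
    rw [← Real.rpow_add hu]; congr 1; ring
  simp only [Pi.add_apply]
  rw [h3]
  calc _ ≤ u ^ (a - 1) * Real.exp (-(u * x)) * (2 ^ |c| * (1 + u ^ |c|)) := by
        gcongr; exact one_add_rpow_le hu c
    _ = _ := by ring

/-- Splitting off `1 + u` from the weight. -/
lemma one_add_rpow_succ {u : ℝ} (hu : 0 < u) (c : ℝ) :
    (1 + u) ^ (c + 1) = (1 + u) ^ c + u * (1 + u) ^ c := by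
  rw [Real.rpow_add_one (by positivity)]; ring

/-- Differentiating under the integral sign produces the factor `-u = 1 - (1 + u)`, which is the
lowering relation `I_β' = I_β - I_{β-1}`, with `I_β = kummerInt α β`. -/
lemma hasDerivAt_kummerInt {α x : ℝ} (β : ℝ) (hα : 0 < α) (hx : 0 < x) :
    HasDerivAt (kummerInt α β) (kummerInt α β x - kummerInt α (β - 1) x) x := by
  have key := hasDerivAt_integral_of_dominated_loc_of_deriv_le
    (μ := volume.restrict (Set.Ioi (0 : ℝ))) (x₀ := x) (s := Set.Ioi (x / 2))
    (F := fun x u => u ^ (α - 1) * Real.exp (-(u * x)) * (1 + u) ^ (-β))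
    (F' := fun x u => u ^ (α - 1) * (Real.exp (-(u * x)) * (-u)) * (1 + u) ^ (-β))
    (bound := fun u => u ^ (α + 1 - 1) * Real.exp (-(u * (x / 2))) * (1 + u) ^ (-β))
    (Ioi_mem_nhds (by linarith))
    (Filter.Eventually.of_forall fun y => by fun_prop)
    (integrableOn_kummer hα hx _) (by fun_prop)
    ((ae_restrict_iff' measurableSet_Ioi).2 (ae_of_all _ fun u hu y hy => ?_))
    (integrableOn_kummer (by linarith) (by linarith) _)
    ((ae_restrict_iff' measurableSet_Ioi).2 (ae_of_all _ fun u hu y hy => ?_))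
  · refine HasDerivAt.congr_deriv (f := kummerInt α β) key.2 ?_
    symm
    unfold kummerInt
    rw [← integral_sub (integrableOn_kummer hα hx _) (integrableOn_kummer hα hx _)]
    refine setIntegral_congr_fun measurableSet_Ioi fun u hu => ?_
    rw [show -(β - 1) = -β + 1 by ring, one_add_rpow_succ hu]
    ring
  · have hu : 0 < u := hu
    have hy : x / 2 < y := hy
    have h3 : u ^ (α + 1 - 1) = u ^ (α - 1) * u := by
      rw [← Real.rpow_add_one hu.ne']; congr 1; ring
    have h4 : ‖u ^ (α - 1) * (Real.exp (-(u * y)) * (-u)) * (1 + u) ^ (-β)‖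
        = u ^ (α - 1) * u * Real.exp (-(u * y)) * (1 + u) ^ (-β) := by
      rw [← norm_neg, Real.norm_of_nonneg]
      · ring
      · have : 0 ≤ u ^ (α - 1) * u * Real.exp (-(u * y)) * (1 + u) ^ (-β) := by positivity
        linarith
    rw [h4, h3]
    gcongr
  · have : HasDerivAt (fun z => -(u * z)) (-u) y := by
      simpa using ((hasDerivAt_id' y).const_mul u).fun_neg
    exact ((this.exp).const_mul _).mul_const _

/-- Obtained by integrating the total derivative of `u ^ α * exp (-u x) * (1 + u) ^ (-β)`, which
vanishes at both ends. -/
lemma kummerInt_recurrence {α x : ℝ} (β : ℝ) (hα : 0 < α) (hx : 0 < x) :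
    (β - α) * kummerInt α β x - β * kummerInt α (β + 1) x
      = x * (kummerInt α β x - kummerInt α (β - 1) x) := by
  set w : ℝ → ℝ := fun u => u ^ (α - 1) * Real.exp (-(u * x)) with hw
  have i0 : IntegrableOn (fun u => w u * (1 + u) ^ (-β)) (Set.Ioi 0) :=
    integrableOn_kummer hα hx _
  have i1 : IntegrableOn (fun u => w u * (1 + u) ^ (-(β + 1))) (Set.Ioi 0) :=
    integrableOn_kummer hα hx _
  have i2 : IntegrableOn (fun u => w u * (1 + u) ^ (-(β - 1))) (Set.Ioi 0) :=
    integrableOn_kummer hα hx _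
  set f : ℝ → ℝ := fun u => u ^ α * Real.exp (-(u * x)) * (1 + u) ^ (-β) with hf
  set f' : ℝ → ℝ := fun u => (α + x - β) * (w u * (1 + u) ^ (-β))
    + β * (w u * (1 + u) ^ (-(β + 1))) - x * (w u * (1 + u) ^ (-(β - 1))) with hf'
  have hderiv : ∀ u ∈ Set.Ioi (0 : ℝ), HasDerivAt f (f' u) u := by
    intro u hu
    have hu : 0 < u := hu
    have d1 : HasDerivAt (fun u : ℝ => u ^ α) (α * u ^ (α - 1)) u :=
      Real.hasDerivAt_rpow_const (Or.inl hu.ne')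
    have d2 : HasDerivAt (fun z : ℝ => -(z * x)) (-x) u := by
      simpa using ((hasDerivAt_id' u).mul_const x).fun_neg
    have d3 : HasDerivAt (fun z : ℝ => (1 + z) ^ (-β)) (1 * (-β) * (1 + u) ^ (-β - 1)) u :=
      ((hasDerivAt_id' u).const_add 1).rpow_const (Or.inl (by positivity))
    refine ((d1.fun_mul d2.exp).fun_mul d3).congr_deriv ?_
    simp only [hf', hw]
    have e1 : u ^ α = u ^ (α - 1) * u := by
      rw [← Real.rpow_add_one hu.ne']; simp
    have e2 := one_add_rpow_succ hu (-(β + 1))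
    have e3 := one_add_rpow_succ hu (-β)
    rw [show -(β + 1) + 1 = -β by ring] at e2
    rw [show -(β - 1) = -β + 1 by ring, e3, show -β - 1 = -(β + 1) by ring, e2, e1]
    ring
  have ia := i0.const_mul (α + x - β)
  have ib := i1.const_mul β
  have ic := i2.const_mul x
  have hInt : IntegrableOn f' (Set.Ioi 0) := (ia.add ib).sub ic
  have hfint : IntegrableOn f (Set.Ioi 0) := by
    have := integrableOn_kummer (a := α + 1) (by linarith) hx (-β)
    simpa only [add_sub_cancel_right] using this
  have hcont : ContinuousWithinAt f (Set.Ici 0) 0 := by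
    apply ContinuousAt.continuousWithinAt
    refine ((Real.continuousAt_rpow_const _ _ (Or.inr hα.le)).mul (by fun_prop)).mul ?_
    exact ContinuousAt.rpow_const (by fun_prop) (Or.inl (by norm_num))
  have h := integral_Ioi_of_hasDerivAt_of_tendsto hcont hderiv hInt
    (tendsto_zero_of_hasDerivAt_of_integrableOn_Ioi hderiv hInt hfint)
  have hf0 : f 0 = 0 := by simp [hf, Real.zero_rpow hα.ne']
  have hsplit : ∫ u in Set.Ioi (0 : ℝ), f' u
      = (α + x - β) * (∫ u in Set.Ioi (0 : ℝ), w u * (1 + u) ^ (-β))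
        + β * (∫ u in Set.Ioi (0 : ℝ), w u * (1 + u) ^ (-(β + 1)))
        - x * (∫ u in Set.Ioi (0 : ℝ), w u * (1 + u) ^ (-(β - 1))) := by
    rw [← integral_const_mul, ← integral_const_mul, ← integral_const_mul]
    refine (integral_sub (ia.add ib) ic).trans ?_
    exact congrArg (· - _) (integral_add ia ib)
  rw [hf0, sub_zero, hsplit] at h
  have k0 : ∫ u in Set.Ioi (0 : ℝ), w u * (1 + u) ^ (-β) = kummerInt α β x := rfl
  have k1 : ∫ u in Set.Ioi (0 : ℝ), w u * (1 + u) ^ (-(β + 1)) = kummerInt α (β + 1) x := rfl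
  have k2 : ∫ u in Set.Ioi (0 : ℝ), w u * (1 + u) ^ (-(β - 1)) = kummerInt α (β - 1) x := rfl
  rw [k0, k1, k2] at h
  linear_combination -h

lemma hasDerivAt_kummerInt' {α x : ℝ} (β : ℝ) (hα : 0 < α) (hx : 0 < x) :
    HasDerivAt (kummerInt α β)
      (((β - α) * kummerInt α β x - β * kummerInt α (β + 1) x) / x) x := by
  rw [kummerInt_recurrence β hα hx, mul_div_cancel_left₀ _ hx.ne']
  exact hasDerivAt_kummerInt β hα hx

/-! ### Behaviour of the integral at `0` -/

/-- Euler's beta integral over the half-line, from the one over `(0, 1)` by `t = u / (1 + u)`. -/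
lemma integral_beta_Ioi {α γ : ℝ} (hα : 0 < α) (hγ : 0 < γ) :
    ∫ u in Set.Ioi (0 : ℝ), u ^ (α - 1) * (1 + u) ^ (-(α + γ))
      = Real.Gamma γ * Real.Gamma α / Real.Gamma (α + γ) := by
  have himg : (fun u : ℝ => u / (1 + u)) '' Set.Ioi 0 = Set.Ioo 0 1 := by
    ext t
    constructor
    · rintro ⟨u, hu, rfl⟩
      have hu : 0 < u := hu
      exact ⟨by positivity, by rw [div_lt_one (by positivity)]; linarith⟩
    · rintro ⟨h0, h1⟩
      have h2 : 0 < 1 - t := by linarith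
      refine ⟨t / (1 - t), div_pos h0 h2, ?_⟩
      field_simp
      ring
  have hder : ∀ u ∈ Set.Ioi (0 : ℝ), HasDerivWithinAt (fun u : ℝ => u / (1 + u))
      (1 / (1 + u) ^ 2) (Set.Ioi 0) u := by
    intro u hu
    have hu : 0 < u := hu
    have : HasDerivAt (fun u : ℝ => u / (1 + u)) (1 / (1 + u) ^ 2) u := by
      refine ((hasDerivAt_id' u).fun_div ((hasDerivAt_id' u).const_add 1)
        (by positivity)).congr_deriv ?_
      congr 1; ring
    exact this.hasDerivWithinAt
  have hinj : Set.InjOn (fun u : ℝ => u / (1 + u)) (Set.Ioi 0) := by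
    intro u hu v hv h
    have hu : 0 < u := hu
    have hv : 0 < v := hv
    simp only at h
    rw [div_eq_div_iff (by positivity) (by positivity)] at h
    linarith
  have h := integral_image_eq_integral_abs_deriv_smul measurableSet_Ioi hder hinj
    (fun t : ℝ => t ^ (α - 1) * (1 - t) ^ (γ - 1))
  rw [himg] at h
  have hL : ∫ t in Set.Ioo (0 : ℝ) 1, t ^ (α - 1) * (1 - t) ^ (γ - 1)
      = Real.Gamma γ * Real.Gamma α / Real.Gamma (α + γ) := by
    have hb := ProbabilityTheory.beta_eq_betaIntegralReal α γ hα hγ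
    rw [ProbabilityTheory.beta, Complex.betaIntegral,
      intervalIntegral.integral_of_le zero_le_one, integral_Ioc_eq_integral_Ioo] at hb
    have hc : ∫ t in Set.Ioo (0 : ℝ) 1, (t : ℂ) ^ ((α : ℂ) - 1) * (1 - (t : ℂ)) ^ ((γ : ℂ) - 1)
        = ((∫ t in Set.Ioo (0 : ℝ) 1, t ^ (α - 1) * (1 - t) ^ (γ - 1) : ℝ) : ℂ) := by
      rw [← integral_complex_ofReal]
      refine setIntegral_congr_fun measurableSet_Ioo fun t ht => ?_
      have h1 : 0 ≤ 1 - t := by linarith [ht.2]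
      rw [Complex.ofReal_mul, Complex.ofReal_cpow ht.1.le, Complex.ofReal_cpow h1]
      push_cast
      rfl
    rw [hc, Complex.ofReal_re] at hb
    rw [← hb]; ring
  rw [← hL, h]
  refine setIntegral_congr_fun measurableSet_Ioi fun u hu => ?_
  have hu : 0 < u := hu
  have h1 : 0 < 1 + u := by positivity
  simp only [smul_eq_mul]
  have e1 : 1 - u / (1 + u) = (1 + u)⁻¹ := by field_simp; ring
  have e2 : (1 / (1 + u) ^ 2 : ℝ) = (1 + u) ^ (-2 : ℝ) := by
    rw [Real.rpow_neg h1.le, one_div]; norm_cast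
  rw [abs_of_pos (by positivity), e1, e2, Real.div_rpow hu.le h1.le, Real.inv_rpow h1.le,
    div_eq_mul_inv, ← Real.rpow_neg h1.le, ← Real.rpow_neg h1.le]
  rw [show (-(α + γ)) = -2 + -(α - 1) + -(γ - 1) by ring, Real.rpow_add h1, Real.rpow_add h1]
  ring

lemma tendsto_kummerInt_zero {α β : ℝ} (hα : 0 < α) (hβ : α < β) :
    Filter.Tendsto (kummerInt α β) (nhdsWithin 0 (Set.Ioi 0))
      (nhds (Real.Gamma (β - α) * Real.Gamma α / Real.Gamma β)) := by
  have hB := integral_beta_Ioi hα (sub_pos.2 hβ)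
  rw [add_sub_cancel] at hB
  rw [← hB]
  have hInt : IntegrableOn (fun u : ℝ => u ^ (α - 1) * (1 + u) ^ (-β)) (Set.Ioi 0) := by
    -- a non-integrable function would have integral `0`, but the beta value is positive
    by_contra hcon
    rw [integral_undef hcon] at hB
    have h1 := Real.Gamma_pos_of_pos hα
    have h2 := Real.Gamma_pos_of_pos (sub_pos.2 hβ)
    have h3 := Real.Gamma_pos_of_pos (hα.trans hβ)
    have : 0 < Real.Gamma (β - α) * Real.Gamma α / Real.Gamma β := by positivity
    linarith
  unfold kummerInt
  refine tendsto_integral_filter_of_dominated_convergence _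
    (Filter.Eventually.of_forall fun x => by fun_prop) ?_ hInt ?_
  · filter_upwards [self_mem_nhdsWithin] with x hx
    refine (ae_restrict_iff' measurableSet_Ioi).2 (ae_of_all _ fun u hu => ?_)
    have hu : 0 < u := hu
    have hx : 0 < x := hx
    rw [Real.norm_of_nonneg (by positivity)]
    have : Real.exp (-(u * x)) ≤ 1 := Real.exp_le_one_iff.2 (by nlinarith)
    have h0 : 0 ≤ u ^ (α - 1) := by positivity
    gcongr
    nlinarith
  · refine ae_of_all _ fun u => ?_
    have : Continuous fun x : ℝ => u ^ (α - 1) * Real.exp (-(u * x)) * (1 + u) ^ (-β) := by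
      fun_prop
    simpa using (this.tendsto 0).mono_left nhdsWithin_le_nhds

/-- The substitution `v = u x` isolates the leading singular term of the integral at `0`. -/
lemma rpow_mul_kummerInt {α γ x : ℝ} (hx : 0 < x) :
    x ^ (α - γ) * kummerInt α γ x
      = ∫ v in Set.Ioi (0 : ℝ), v ^ (α - 1) * Real.exp (-v) * (x + v) ^ (-γ) := by
  have h := integral_comp_mul_left_Ioi
    (fun v : ℝ => v ^ (α - 1) * Real.exp (-v) * (x + v) ^ (-γ)) 0 hx
  rw [mul_zero, smul_eq_mul] at h
  have h2 : ∫ v in Set.Ioi (0 : ℝ), v ^ (α - 1) * Real.exp (-v) * (x + v) ^ (-γ)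
      = x * ∫ u in Set.Ioi (0 : ℝ),
        (x * u) ^ (α - 1) * Real.exp (-(x * u)) * (x + x * u) ^ (-γ) := by
    rw [h, ← mul_assoc, mul_inv_cancel₀ hx.ne', one_mul]
  rw [h2, kummerInt, ← integral_const_mul, ← integral_const_mul]
  refine setIntegral_congr_fun measurableSet_Ioi fun u hu => ?_
  have hu : 0 < u := hu
  rw [show x + x * u = x * (1 + u) by ring, Real.mul_rpow hx.le hu.le,
    Real.mul_rpow hx.le (by positivity), mul_comm u x,
    show α - γ = 1 + (α - 1) + -γ by ring, Real.rpow_add hx, Real.rpow_add hx, Real.rpow_one]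
  ring

lemma tendsto_rpow_mul_kummerInt_zero {α γ : ℝ} (hα : 0 < α) (hγ : γ < α) :
    Filter.Tendsto (fun x => x ^ (α - γ) * kummerInt α γ x) (nhdsWithin 0 (Set.Ioi 0))
      (nhds (Real.Gamma (α - γ))) := by
  have hG : Real.Gamma (α - γ)
      = ∫ v in Set.Ioi (0 : ℝ), v ^ (α - 1) * Real.exp (-v) * (0 + v) ^ (-γ) := by
    rw [Real.Gamma_eq_integral (sub_pos.2 hγ)]
    refine setIntegral_congr_fun measurableSet_Ioi fun v hv => ?_
    have hv : 0 < v := hv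
    rw [zero_add, show α - γ - 1 = (α - 1) + -γ by ring, Real.rpow_add hv]
    ring
  have hev : (fun x => ∫ v in Set.Ioi (0 : ℝ), v ^ (α - 1) * Real.exp (-v) * (x + v) ^ (-γ))
      =ᶠ[nhdsWithin 0 (Set.Ioi 0)] fun x => x ^ (α - γ) * kummerInt α γ x := by
    filter_upwards [self_mem_nhdsWithin] with x hx
    exact (rpow_mul_kummerInt hx).symm
  refine Filter.Tendsto.congr' hev ?_
  rw [hG]
  have i1 := integrableOn_kummer (a := α) hα one_pos (-γ)
  have i2 := integrableOn_rpow_mul_exp (a := α - γ) (x := 1) (by linarith) one_pos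
  refine tendsto_integral_filter_of_dominated_convergence _
    (Filter.Eventually.of_forall fun x => by fun_prop) ?_ (i1.add i2) ?_
  · filter_upwards [Ioo_mem_nhdsGT (show (0 : ℝ) < 1 by norm_num)] with x hx
    refine (ae_restrict_iff' measurableSet_Ioi).2 (ae_of_all _ fun v hv => ?_)
    have hv : 0 < v := hv
    have hx0 : 0 < x := hx.1
    rw [Real.norm_of_nonneg (by positivity)]
    -- `t ↦ t ^ (-γ)` is monotone or antitone, so one endpoint of `[v, 1 + v]` dominates
    have hm : (x + v) ^ (-γ) ≤ (1 + v) ^ (-γ) + v ^ (-γ) := by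
      have p1 : 0 ≤ (1 + v) ^ (-γ) := by positivity
      have p2 : 0 ≤ v ^ (-γ) := by positivity
      rcases le_total 0 (-γ) with h | h
      · have := Real.rpow_le_rpow (by positivity) (show x + v ≤ 1 + v by linarith [hx.2]) h
        linarith
      · have := Real.rpow_le_rpow_of_nonpos hv (show v ≤ x + v by linarith) h
        linarith
    simp only [Pi.add_apply, mul_one]
    rw [show α - γ - 1 = (α - 1) + -γ by ring, Real.rpow_add hv]
    calc _ ≤ v ^ (α - 1) * Real.exp (-v) * ((1 + v) ^ (-γ) + v ^ (-γ)) := by gcongr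
      _ = _ := by ring
  · refine (ae_restrict_iff' measurableSet_Ioi).2 (ae_of_all _ fun v hv => ?_)
    have hv : 0 < v := hv
    have : ContinuousAt (fun x : ℝ => v ^ (α - 1) * Real.exp (-v) * (x + v) ^ (-γ)) 0 := by
      refine continuousAt_const.mul (ContinuousAt.rpow_const (by fun_prop) (Or.inl ?_))
      simpa using hv.ne'
    exact this.tendsto.mono_left nhdsWithin_le_nhds

/-! ### Uniqueness at the singular point, and the formula -/

/-- With `Y = x ^ (1 - s) * Q` the system becomes `P' = P - x ^ (s - 1) * Y`,
`Y' = -c * x ^ (-s) * P`, whose coefficients are integrable at `0` because `0 < s < 1`; hence a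
solution with `P` and `Y` tending to `0` at `0` vanishes, by Grönwall applied to `P ^ 2 + Y ^ 2`. -/
lemma system_unique {s c : ℝ} (hs0 : 0 < s) (hs1 : s < 1) {P Q : ℝ → ℝ}
    (hP : ∀ x, 0 < x → HasDerivAt P (P x - Q x) x)
    (hQ : ∀ x, 0 < x → HasDerivAt Q (((s - 1) * Q x - c * P x) / x) x)
    (lP : Filter.Tendsto P (nhdsWithin 0 (Set.Ioi 0)) (nhds 0))
    (lQ : Filter.Tendsto (fun x => x ^ (1 - s) * Q x) (nhdsWithin 0 (Set.Ioi 0)) (nhds 0))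
    {x : ℝ} (hx : 0 < x) : P x = 0 := by
  set Y : ℝ → ℝ := fun x => x ^ (1 - s) * Q x with hY
  -- `K` is a primitive of `2 + x ^ (s - 1) + |c| * x ^ (-s)`
  set K : ℝ → ℝ := fun x => 2 * x + x ^ s / s + |c| * (x ^ (1 - s) / (1 - s)) with hK
  set G : ℝ → ℝ := fun x => (P x ^ 2 + Y x ^ 2) * Real.exp (-K x) with hG
  have hs1' : 1 - s ≠ 0 := by linarith
  have hdY : ∀ y, 0 < y → HasDerivAt Y (-c * y ^ (-s) * P y) y := by
    intro y hy
    have d : HasDerivAt (fun x : ℝ => x ^ (1 - s)) ((1 - s) * y ^ (1 - s - 1)) y :=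
      Real.hasDerivAt_rpow_const (Or.inl hy.ne')
    refine (d.fun_mul (hQ y hy)).congr_deriv ?_
    have e : y ^ (1 - s) = y ^ (-s) * y := by
      rw [← Real.rpow_add_one hy.ne']; congr 1; ring
    rw [e, show 1 - s - 1 = -s by ring]
    field_simp
    ring
  have hdK : ∀ y, 0 < y → HasDerivAt K (2 + y ^ (s - 1) + |c| * y ^ (-s)) y := by
    intro y hy
    have d1 : HasDerivAt (fun x : ℝ => x ^ s) (s * y ^ (s - 1)) y :=
      Real.hasDerivAt_rpow_const (Or.inl hy.ne')
    have d2 : HasDerivAt (fun x : ℝ => x ^ (1 - s)) ((1 - s) * y ^ (1 - s - 1)) y :=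
      Real.hasDerivAt_rpow_const (Or.inl hy.ne')
    refine ((((hasDerivAt_id' y).const_mul 2).fun_add (d1.div_const s)).fun_add
      ((d2.div_const (1 - s)).const_mul |c|)).congr_deriv ?_
    rw [show 1 - s - 1 = -s by ring]
    field_simp
  have hdG : ∀ y, 0 < y → HasDerivAt G
      ((2 * P y * (P y - Q y) + 2 * Y y * (-c * y ^ (-s) * P y)
        - (P y ^ 2 + Y y ^ 2) * (2 + y ^ (s - 1) + |c| * y ^ (-s))) * Real.exp (-K y)) y := by
    intro y hy
    refine ((((hP y hy).fun_pow 2).fun_add ((hdY y hy).fun_pow 2)).fun_mul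
      (hdK y hy).fun_neg.exp).congr_deriv ?_
    push_cast
    ring
  have hanti : AntitoneOn G (Set.Ioi 0) := by
    refine antitoneOn_of_deriv_nonpos (convex_Ioi 0)
      (fun y hy => (hdG y hy).continuousAt.continuousWithinAt) ?_ ?_
    · rw [interior_Ioi]
      exact fun y hy => (hdG y hy).differentiableAt.differentiableWithinAt
    · rw [interior_Ioi]
      intro y hy
      have hy : 0 < y := hy
      rw [(hdG y hy).deriv]
      refine mul_nonpos_of_nonpos_of_nonneg ?_ (Real.exp_pos _).le
      have eQ : Q y = y ^ (s - 1) * Y y := by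
        simp only [hY]
        rw [← mul_assoc, ← Real.rpow_add hy]
        simp
      rw [eQ]
      have a1 : 0 ≤ y ^ (s - 1) := by positivity
      have a2 : 0 ≤ y ^ (-s) := by positivity
      have b1 : 0 ≤ y ^ (s - 1) * (P y + Y y) ^ 2 := by positivity
      have b2 : 0 ≤ |c| * (P y ^ 2 + Y y ^ 2) + 2 * c * P y * Y y := by
        rcases abs_cases c with ⟨h, h'⟩ | ⟨h, h'⟩
        · rw [h]; nlinarith [mul_nonneg h' (sq_nonneg (P y + Y y))]
        · rw [h]; nlinarith [mul_nonneg (neg_nonneg.2 h'.le) (sq_nonneg (P y - Y y))]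
      nlinarith [mul_nonneg a2 b2, sq_nonneg (Y y)]
  have lK : Filter.Tendsto K (nhdsWithin 0 (Set.Ioi 0)) (nhds (K 0)) := by
    have : ContinuousAt K 0 := by
      have c1 : ContinuousAt (fun x : ℝ => x ^ s) 0 :=
        Real.continuousAt_rpow_const _ _ (Or.inr hs0.le)
      have c2 : ContinuousAt (fun x : ℝ => x ^ (1 - s)) 0 :=
        Real.continuousAt_rpow_const _ _ (Or.inr (by linarith))
      exact ((continuousAt_const.mul continuousAt_id).add (c1.div_const s)).add
        (continuousAt_const.mul (c2.div_const (1 - s)))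
    exact this.tendsto.mono_left nhdsWithin_le_nhds
  have lG : Filter.Tendsto G (nhdsWithin 0 (Set.Ioi 0)) (nhds 0) := by
    have := ((lP.pow 2).add (lQ.pow 2)).mul (Real.continuous_exp.tendsto _ |>.comp lK.neg)
    simpa using this
  have hGx : G x ≤ 0 := by
    refine ge_of_tendsto lG ?_
    filter_upwards [Ioo_mem_nhdsGT hx] with y hy
    exact hanti hy.1 hx hy.2.le
  have hE : P x ^ 2 + Y x ^ 2 ≤ 0 := by
    by_contra h
    have : 0 < G x := mul_pos (not_le.1 h) (Real.exp_pos _)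
    linarith
  exact (pow_eq_zero_iff two_ne_zero).1
    (le_antisymm (by linarith [sq_nonneg (Y x)]) (sq_nonneg (P x)))

lemma tendsto_rpow_zero {s : ℝ} (hs : 0 < s) :
    Filter.Tendsto (fun x : ℝ => x ^ s) (nhdsWithin 0 (Set.Ioi 0)) (nhds 0) := by
  have := (Real.continuousAt_rpow_const 0 s (Or.inr hs.le)).tendsto
  rw [Real.zero_rpow hs.ne'] at this
  exact this.mono_left nhdsWithin_le_nhds

lemma tendsto_kummerRhs_zero {α β : ℝ} (hβ : α < β) :
    Filter.Tendsto (kummerRhs α β) (nhdsWithin 0 (Set.Ioi 0))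
      (nhds (Real.Gamma (β - α) * Real.Gamma α / Real.Gamma β)) := by
  have h := ((tendsto_kummerPhi_zero α (α - β + 1)).const_mul
    (Real.Gamma (β - α) * Real.Gamma α / Real.Gamma β)).add
    (((tendsto_rpow_zero (sub_pos.2 hβ)).const_mul (Real.Gamma (α - β))).mul
      (tendsto_kummerPhi_zero β (β - α + 1)))
  simp only [mul_one, mul_zero, add_zero] at h
  exact h

lemma tendsto_rpow_mul_kummerRhs_zero {α γ : ℝ} (hγ : γ < α) :
    Filter.Tendsto (fun x => x ^ (α - γ) * kummerRhs α γ x) (nhdsWithin 0 (Set.Ioi 0))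
      (nhds (Real.Gamma (α - γ))) := by
  have h := ((tendsto_rpow_zero (sub_pos.2 hγ)).mul ((tendsto_kummerPhi_zero α (α - γ + 1)).const_mul
    (Real.Gamma (γ - α) * Real.Gamma α / Real.Gamma γ))).add
      ((tendsto_kummerPhi_zero γ (γ - α + 1)).const_mul (Real.Gamma (α - γ)))
  simp only [mul_one, zero_mul, zero_add] at h
  refine h.congr' ?_
  filter_upwards [self_mem_nhdsWithin] with x hx
  have hx : 0 < x := hx
  have e : x ^ (α - γ) * x ^ (γ - α) = 1 := by
    rw [← Real.rpow_add hx]; simp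
  unfold kummerRhs
  linear_combination (-(Real.Gamma (α - γ) * kummerPhi γ (γ - α + 1) x)) * e

/-- The formula in the base strip `α < β < α + 1`. -/
lemma kummerInt_eq_of_strip {α β : ℝ} (hα : 0 < α) (h0 : α < β) (h1 : β < α + 1)
    (hαβ : ∀ k : ℤ, α - β ≠ k) {x : ℝ} (hx : 0 < x) : kummerInt α β x = kummerRhs α β x := by
  have hαβ' : ∀ k : ℤ, α - (β - 1) ≠ k := fun k h => hαβ (k - 1) (by push_cast; linarith)
  rw [← sub_eq_zero]
  refine system_unique (s := β - α) (c := β - 1)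
    (P := fun x => kummerInt α β x - kummerRhs α β x)
    (Q := fun x => kummerInt α (β - 1) x - kummerRhs α (β - 1) x)
    (by linarith) (by linarith) ?_ ?_ ?_ ?_ hx
  · intro y hy
    refine ((hasDerivAt_kummerInt β hα hy).fun_sub (hasDerivAt_kummerRhs hαβ hy)).congr_deriv ?_
    ring
  · intro y hy
    refine ((hasDerivAt_kummerInt' (β - 1) hα hy).fun_sub
      (hasDerivAt_kummerRhs' hαβ' hy)).congr_deriv ?_
    rw [sub_add_cancel]
    ring
  · simpa using (tendsto_kummerInt_zero hα h0).sub (tendsto_kummerRhs_zero h0)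
  · have := (tendsto_rpow_mul_kummerInt_zero hα (γ := β - 1) (by linarith)).sub
      (tendsto_rpow_mul_kummerRhs_zero (α := α) (γ := β - 1) (by linarith))
    rw [sub_self] at this
    refine this.congr fun y => ?_
    rw [show α - (β - 1) = 1 - (β - α) by ring]
    ring

/-- Equality on the half-line forces equality of derivatives there. -/
lemma deriv_unique_of_eqOn {f g : ℝ → ℝ} {f' g' x : ℝ} (h : ∀ y, 0 < y → f y = g y) (hx : 0 < x)
    (hf : HasDerivAt f f' x) (hg : HasDerivAt g g' x) : f' = g' := by
  refine hf.unique (hg.congr_of_eventuallyEq ?_)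
  filter_upwards [Ioi_mem_nhds hx] with y hy
  exact h y hy

lemma kummerInt_eq_sub_one {α β : ℝ} (hα : 0 < α) (hαβ : ∀ k : ℤ, α - β ≠ k)
    (h : ∀ x, 0 < x → kummerInt α β x = kummerRhs α β x) :
    ∀ x, 0 < x → kummerInt α (β - 1) x = kummerRhs α (β - 1) x := by
  intro x hx
  have := deriv_unique_of_eqOn h hx (hasDerivAt_kummerInt β hα hx) (hasDerivAt_kummerRhs hαβ hx)
  linarith [h x hx]

/-- The raising relation determines `I_{β+1}` only when `β ≠ 0`; raising is needed only from
`β > α`, where `β > 0`. -/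
lemma kummerInt_eq_add_one {α β : ℝ} (hα : 0 < α) (hαβ : ∀ k : ℤ, α - β ≠ k) (hβ : 0 < β)
    (h : ∀ x, 0 < x → kummerInt α β x = kummerRhs α β x) :
    ∀ x, 0 < x → kummerInt α (β + 1) x = kummerRhs α (β + 1) x := by
  intro x hx
  have := deriv_unique_of_eqOn h hx (hasDerivAt_kummerInt' β hα hx)
    (hasDerivAt_kummerRhs' hαβ hx)
  rw [div_left_inj' hx.ne', h x hx] at this
  exact mul_left_cancel₀ hβ.ne' (by linarith)

lemma kummerInt_eq_kummerRhs {α β : ℝ} (hα : 0 < α) (hαβ : ∀ k : ℤ, α - β ≠ k) :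
    ∀ x, 0 < x → kummerInt α β x = kummerRhs α β x := by
  -- `b` is the translate of `β` by an integer that lies in the base strip
  set b : ℝ := α + Int.fract (β - α) with hb
  have hfr : Int.fract (β - α) = β - α - ⌊β - α⌋ := rfl
  have hne : ∀ m k : ℤ, α - (b + m) ≠ k := fun m k h =>
    hαβ (k + m - ⌊β - α⌋) (by push_cast; linarith)
  have hf0 : 0 < Int.fract (β - α) := by
    refine lt_of_le_of_ne (Int.fract_nonneg _) fun h => hne 0 0 ?_
    rw [hb, ← h]; simp
  have hf1 := Int.fract_lt_one (β - α)
  have hbase : ∀ x, 0 < x → kummerInt α b x = kummerRhs α b x := fun x hx =>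
    kummerInt_eq_of_strip hα (by linarith) (by linarith)
      (fun k => by simpa using hne 0 k) hx
  have hup : ∀ n : ℕ, ∀ x, 0 < x → kummerInt α (b + n) x = kummerRhs α (b + n) x := by
    intro n
    induction n with
    | zero => simpa using hbase
    | succ n ih =>
      have := kummerInt_eq_add_one hα (fun k => by simpa using hne n k)
        (by have : (0 : ℝ) ≤ n := n.cast_nonneg
            linarith) ih
      simpa [add_assoc] using this
  have hdown : ∀ n : ℕ, ∀ x, 0 < x → kummerInt α (b - n) x = kummerRhs α (b - n) x := by
    intro n
    induction n with
    | zero => simpa using hbase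
    | succ n ih =>
      have := kummerInt_eq_sub_one hα (fun k => by simpa [sub_eq_add_neg] using hne (-n) k) ih
      simpa [sub_sub] using this
  have hβ : β = b + (⌊β - α⌋ : ℤ) := by rw [hb, hfr]; ring
  obtain ⟨n, hn | hn⟩ := Int.eq_nat_or_neg ⌊β - α⌋
  · rw [hn] at hβ
    rw [hβ]; simpa using hup n
  · rw [hn] at hβ
    rw [hβ]; simpa [sub_eq_add_neg] using hdown n

/-- (x^α/Γ(α))·∫₀^∞ u^{α−1} e^{−ux} (1+u)^{−β} du
      = (Γ(β−α)/Γ(β))·x^α·φ(α,α−β+1,x) + (Γ(α−β)/Γ(α))·x^β·φ(β,β−α+1,x). -/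
theorem kummer_integral_phi (α β x : ℝ) (hx : 0 < x) (hα : 0 < α)
    (hαβ : ∀ k : ℤ, α - β ≠ (k : ℝ)) :
    x ^ α / Real.Gamma α *
        ∫ u in Set.Ioi (0 : ℝ), u ^ (α - 1) * Real.exp (-(u * x)) * (1 + u) ^ (-β)
      = Real.Gamma (β - α) / Real.Gamma β * x ^ α * kummerPhi α (α - β + 1) x
        + Real.Gamma (α - β) / Real.Gamma α * x ^ β * kummerPhi β (β - α + 1) x := by
  have h := kummerInt_eq_kummerRhs hα hαβ x hx
  have hΓ : Real.Gamma α ≠ 0 := (Real.Gamma_pos_of_pos hα).ne'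
  have e : x ^ β = x ^ α * x ^ (β - α) := by
    rw [← Real.rpow_add hx]; congr 1; ring
  unfold kummerInt kummerRhs at h
  rw [h, e]
  field_simp
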